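/- arXiv:2405.14914 — 2 statements merged into one kernel-verified Lean document; each statement's English description precedes it below -/
import Mathlib

section
/- Let U := { x ∈ ℤ_p^{r_A} : Δ_r(x) ≠ 0 } (so U = ℤ_p^{r_A} if r = 0); on U every Δ_i(x) with 0 ≤ i ≤ r is nonzero, and U has full Haar measure. For real s > 0 define Z(s) := ∫_{ℤ_p^{r_A} × ℤ_p^{r_B}} ‖θ(a)·b‖^s dμ(a,b), with the convention 0^s := 0. Then Z(s) = 1 − Σ_{i=0}^{r} [ p^{−i}·(1 − p^{−s}) / (1 − p^{−(s+i)}) ] · ∫_U ( (‖Δ_i(x)‖/‖Δ_{i−1}(x)‖)^{s+i} − (‖Δ_{i+1}(x)‖/‖Δ_i(x)‖)^{s+i} ) · ‖Δ_i(x)‖^{−1} dμ(x), where by convention ‖Δ_{−1}(x)‖ = ‖Δ_0(x)‖ = 1 and ‖Δ_{r+1}(x)‖ = 0. -/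
open MeasureTheory

noncomputable instance (p : ℕ) [Fact p.Prime] : MeasurableSpace ℤ_[p] := borel _
instance (p : ℕ) [Fact p.Prime] : BorelSpace ℤ_[p] := ⟨rfl⟩

/-- The Haar probability measure on the compact additive group `ℤ_p`. -/
noncomputable def padicHaar (p : ℕ) [Fact p.Prime] : Measure ℤ_[p] :=
  Measure.addHaarMeasure ⟨⟨Set.univ, isCompact_univ⟩, by simp⟩

/-- The Haar probability measure on `ℤ_p^N` (product of the Haar probability measures on
the factors). -/
noncomputable def padicHaarPi (p : ℕ) [Fact p.Prime] (N : ℕ) :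
    Measure (Fin N → ℤ_[p]) :=
  Measure.pi fun _ => padicHaar p

/-- `‖Δ_i(A)‖`: the maximum of the `p`-adic absolute values of all `i × i` minors of the
matrix `A` (with the conventions `‖Δ_0(A)‖ = 1`, and `‖Δ_i(A)‖ = 0` when `i` exceeds the
size of `A`). -/
noncomputable def minorNorm {p : ℕ} [Fact p.Prime] {m n : ℕ}
    (A : Matrix (Fin m) (Fin n) ℤ_[p]) (i : ℕ) : ℝ :=
  ⨆ ρ : (Fin i → Fin m) × (Fin i → Fin n), ‖(A.submatrix ρ.1 ρ.2).det‖

/-!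
Since divisibility is total in `ℤ_p`, invertible row and column operations bring a matrix `A` to
diagonal form with diagonal entries `d₁ ∣ d₂ ∣ …`, and `‖Δ_i(A)‖` is invariant under them, so
`‖d_i‖ = ‖Δ_i(A)‖ / ‖Δ_{i-1}(A)‖`. Such operations also preserve both `‖A b‖` and the Haar measure
of sets of vectors `b`; hence for a norm `t` between `‖d_{i+1}‖` and `‖d_i‖` the set
`{b | ‖A b‖ ≤ t}` is, up to equivalence, a box of measure `t ^ i / ‖Δ_i(A)‖`. Integrating
`‖A b‖ ^ s` by layers turns each range `[‖d_{i+1}‖, ‖d_i‖)` of norms into a geometric series of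
ratio `p ^ (-(s + i))`, which is the `i`-th term of the formula. For `A = θ(x)` it remains to
integrate over `x`, the rank being maximal almost everywhere because a minor of `θ(x + t y)` is a
polynomial in `t`, nonzero for a suitable `y`.
-/

open scoped Matrix

section Equivalence

variable {R : Type*} [CommRing R]

section General

variable {m n : Type*} [Fintype m] [DecidableEq m] [Fintype n] [DecidableEq n]
  {A B C : Matrix m n R}

variable (R) in
theorem isUnit_det_permMatrix (σ : Equiv.Perm m) : IsUnit (σ.permMatrix R).det := by
  rw [Matrix.det_permutation]
  exact (Equiv.Perm.sign σ).isUnit.map (Int.castRingHom R)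

/-- Equivalence of matrices: `B` is obtained from `A` by invertible row and column operations. -/
def MatrixEquivalent (A B : Matrix m n R) : Prop :=
  ∃ (U : (Matrix m m R)ˣ) (V : (Matrix n n R)ˣ), B = U.val * A * V.val

namespace MatrixEquivalent

theorem refl (A : Matrix m n R) : MatrixEquivalent A A :=
  ⟨1, 1, by simp⟩

theorem symm : MatrixEquivalent A B → MatrixEquivalent B A := by
  rintro ⟨U, V, rfl⟩
  exact ⟨U⁻¹, V⁻¹, by simp [Matrix.mul_assoc]⟩

theorem trans : MatrixEquivalent A B → MatrixEquivalent B C → MatrixEquivalent A C := by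
  rintro ⟨U, V, rfl⟩ ⟨U', V', rfl⟩
  exact ⟨U' * U, V * V', by simp [Matrix.mul_assoc]⟩

theorem mul_mul (A : Matrix m n R) {U : Matrix m m R} {V : Matrix n n R} (hU : IsUnit U.det)
    (hV : IsUnit V.det) : MatrixEquivalent A (U * A * V) :=
  ⟨U.nonsingInvUnit hU, V.nonsingInvUnit hV, rfl⟩

theorem submatrix (A : Matrix m n R) (σ : Equiv.Perm m) (τ : Equiv.Perm n) :
    MatrixEquivalent A (A.submatrix σ τ) := by
  simpa [PEquiv.toMatrix_toPEquiv_mul, PEquiv.mul_toMatrix_toPEquiv] using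
    mul_mul A (isUnit_det_permMatrix R σ) (isUnit_det_permMatrix R τ.symm)

theorem dvd_of_forall_dvd {c : R} (h : MatrixEquivalent A B) (hA : ∀ i j, c ∣ A i j) (i : m)
    (j : n) : c ∣ B i j := by
  obtain ⟨U, V, rfl⟩ := h
  refine Finset.dvd_sum fun k _ => Dvd.dvd.mul_right (Finset.dvd_sum fun l _ => ?_) _
  exact (hA l k).mul_left _

end MatrixEquivalent

end General

variable {l m n : ℕ}

/-- The block lower triangular matrix with first row `(c, 0)` and rows `(v i, A i)` below it. -/
def lowerBlock (c : R) (v : Fin m → R) (A : Matrix (Fin m) (Fin n) R) :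
    Matrix (Fin (m + 1)) (Fin (n + 1)) R :=
  Matrix.of (Fin.cons (Fin.cons c 0) fun i => Fin.cons (v i) (A i))

theorem det_lowerBlock (c : R) (v : Fin m → R) (A : Matrix (Fin m) (Fin m) R) :
    (lowerBlock c v A).det = c * A.det := by
  have hsub : (lowerBlock c v A).submatrix Fin.succ Fin.succ = A := by ext; simp [lowerBlock]
  rw [Matrix.det_succ_row_zero, Fin.sum_univ_succ]
  rw [Fin.succAbove_zero, hsub]
  simp [lowerBlock]

theorem lowerBlock_zero_mul_lowerBlock_zero (a b : R) (A : Matrix (Fin l) (Fin m) R)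
    (B : Matrix (Fin m) (Fin n) R) :
    lowerBlock a 0 A * lowerBlock b 0 B = lowerBlock (a * b) 0 (A * B) := by
  ext i j
  cases i using Fin.cases <;> cases j using Fin.cases <;>
    simp [lowerBlock, Matrix.mul_apply, Fin.sum_univ_succ]

theorem MatrixEquivalent.lowerBlock_zero {A B : Matrix (Fin m) (Fin n) R}
    (h : MatrixEquivalent A B) (c : R) :
    MatrixEquivalent (lowerBlock c 0 A) (lowerBlock c 0 B) := by
  obtain ⟨U, V, rfl⟩ := h
  have hU : IsUnit (lowerBlock 1 0 U.val).det := by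
    rw [det_lowerBlock, one_mul]; exact (Matrix.isUnit_iff_isUnit_det _).1 U.isUnit
  have hV : IsUnit (lowerBlock 1 0 V.val).det := by
    rw [det_lowerBlock, one_mul]; exact (Matrix.isUnit_iff_isUnit_det _).1 V.isUnit
  simpa only [lowerBlock_zero_mul_lowerBlock_zero, one_mul, mul_one] using
    mul_mul (lowerBlock c 0 A) hU hV

theorem exists_matrixEquivalent_lowerBlock_of_forall_dvd
    (A : Matrix (Fin (m + 1)) (Fin (n + 1)) R) (hA : ∀ i j, A 0 0 ∣ A i j) :
    ∃ B : Matrix (Fin m) (Fin n) R, MatrixEquivalent A (lowerBlock (A 0 0) 0 B) := by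
  choose v hv using fun i : Fin m => hA i.succ 0
  choose w hw using fun j : Fin n => hA 0 j.succ
  have hdet {k : ℕ} (u : Fin k → R) : IsUnit (lowerBlock 1 u 1).det := by simp [det_lowerBlock]
  refine ⟨Matrix.of fun i j => A i.succ j.succ - A i.succ 0 * w j, MatrixEquivalent.symm ?_⟩
  convert MatrixEquivalent.mul_mul _ (hdet v) (V := (lowerBlock 1 w 1)ᵀ)
    (by rw [Matrix.det_transpose]; exact hdet w) using 1
  ext i j
  cases i using Fin.cases <;> cases j using Fin.cases <;>
    simp [lowerBlock, Matrix.mul_apply, Fin.sum_univ_succ, Matrix.one_apply, hv, hw, mul_comm]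

theorem exists_forall_dvd [PreValuationRing R] (A : Matrix (Fin (m + 1)) (Fin (n + 1)) R) :
    ∃ i₀ j₀, ∀ i j, A i₀ j₀ ∣ A i j := by
  have hdir : Directed (Function.swap (· ∣ ·)) fun ij : Fin (m + 1) × Fin (n + 1) => A ij.1 ij.2 :=
    fun ij kl => (ValuationRing.dvd_total (A ij.1 ij.2) (A kl.1 kl.2)).elim
      (fun h => ⟨ij, dvd_rfl, h⟩) fun h => ⟨kl, h, dvd_rfl⟩
  obtain ⟨⟨i₀, j₀⟩, h⟩ := hdir.finite_le id
  exact ⟨i₀, j₀, fun i j => h (i, j)⟩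

/-- The rectangular matrix with diagonal entries `d 0, d 1, …` and zeros elsewhere. -/
def rectDiagonal (m n : ℕ) (d : ℕ → R) : Matrix (Fin m) (Fin n) R :=
  Matrix.of fun i j => if (i : ℕ) = j then d i else 0

theorem lowerBlock_zero_rectDiagonal (c : R) (d : ℕ → R) :
    lowerBlock c 0 (rectDiagonal m n d) =
      rectDiagonal (m + 1) (n + 1) fun j => j.casesOn c d := by
  ext i j
  cases i using Fin.cases <;> cases j using Fin.cases <;> simp [lowerBlock, rectDiagonal]

theorem exists_matrixEquivalent_lowerBlock [PreValuationRing R]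
    (A : Matrix (Fin (m + 1)) (Fin (n + 1)) R) :
    ∃ (c : R) (B : Matrix (Fin m) (Fin n) R),
      MatrixEquivalent A (lowerBlock c 0 B) ∧ ∀ i j, c ∣ B i j := by
  obtain ⟨i₀, j₀, hdvd⟩ := exists_forall_dvd A
  have hswap := MatrixEquivalent.submatrix A (Equiv.swap 0 i₀) (Equiv.swap 0 j₀)
  have hdvd' : ∀ i j, A.submatrix (Equiv.swap 0 i₀) (Equiv.swap 0 j₀) 0 0 ∣
      A.submatrix (Equiv.swap 0 i₀) (Equiv.swap 0 j₀) i j := fun i j => by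
    simpa using hdvd (Equiv.swap 0 i₀ i) (Equiv.swap 0 j₀ j)
  obtain ⟨B, hB⟩ := exists_matrixEquivalent_lowerBlock_of_forall_dvd _ hdvd'
  exact ⟨_, B, hswap.trans hB, fun i j => hB.dvd_of_forall_dvd hdvd' i.succ j.succ⟩

theorem exists_matrixEquivalent_rectDiagonal [PreValuationRing R] (A : Matrix (Fin m) (Fin n) R) :
    ∃ d : ℕ → R, (∀ j, d j ∣ d (j + 1)) ∧ (∀ j, min m n ≤ j → d j = 0) ∧
      MatrixEquivalent A (rectDiagonal m n d) := by
  induction m generalizing n with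
  | zero => exact ⟨0, by simp, by simp, by rw [Subsingleton.elim A]; exact .refl _⟩
  | succ m ih =>
    cases n with
    | zero => exact ⟨0, by simp, by simp, by rw [Subsingleton.elim A]; exact .refl _⟩
    | succ n =>
      obtain ⟨c, B, hAB, hcB⟩ := exists_matrixEquivalent_lowerBlock A
      obtain ⟨d, hdvd, hzero, hB⟩ := ih B
      have hcd : c ∣ d 0 := by
        rcases Nat.eq_zero_or_pos (min m n) with h | h
        · simp [hzero 0 h.le]
        · obtain ⟨hm, hn⟩ := lt_min_iff.1 h
          simpa [rectDiagonal] using hB.dvd_of_forall_dvd hcB ⟨0, hm⟩ ⟨0, hn⟩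
      refine ⟨fun j => j.casesOn c d, ?_, ?_,
        lowerBlock_zero_rectDiagonal c d ▸ hAB.trans (hB.lowerBlock_zero c)⟩
      · rintro (_ | j)
        exacts [hcd, hdvd j]
      · rintro (_ | j) hj
        · simp at hj
        · exact hzero j (by omega)

end Equivalence

section Minors

theorem det_mul_eq_sum_prod_mul_det_submatrix {R m n : Type*} [CommRing R] [Fintype m]
    [Fintype n] [DecidableEq n] (M : Matrix n m R) (N : Matrix m n R) :
    (M * N).det = ∑ f : n → m, (∏ k, M k (f k)) * (N.submatrix f id).det := by
  classical
  have hrows : (M * N).det = Matrix.detRowAlternating.toMultilinearMap fun k => ∑ l, M k l • N l :=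
    congrArg Matrix.det (by ext; simp [Matrix.mul_apply])
  rw [hrows, MultilinearMap.map_sum]
  exact Finset.sum_congr rfl fun f _ => MultilinearMap.map_smul_univ _ _ _

theorem prod_le_prod_range_of_antitone {R : Type*} [CommSemiring R] [PartialOrder R]
    [IsOrderedRing R] {g : ℕ → R} (hg : Antitone g) (hnonneg : ∀ k, 0 ≤ g k) (s : Finset ℕ) :
    ∏ k ∈ s, g k ≤ ∏ k ∈ Finset.range s.card, g k := by
  induction s using Finset.induction_on_max with
  | empty => simp
  | insert a s hlt ih =>
    have ha : a ∉ s := fun h => (hlt a h).false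
    have hcard : s.card ≤ a := by
      simpa using Finset.card_le_card fun k hk => Finset.mem_range.2 (hlt k hk)
    rw [Finset.prod_insert ha, Finset.card_insert_of_notMem ha, Finset.prod_range_succ, mul_comm]
    exact mul_le_mul ih (hg hcard) (hnonneg a) (Finset.prod_nonneg fun k _ => hnonneg k)

variable {p : ℕ} [Fact p.Prime] {l m n : ℕ}

theorem minorNorm_le {A : Matrix (Fin m) (Fin n) ℤ_[p]} {i : ℕ} {c : ℝ} (hc : 0 ≤ c)
    (h : ∀ f g, ‖(A.submatrix f g : Matrix (Fin i) (Fin i) ℤ_[p]).det‖ ≤ c) :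
    minorNorm A i ≤ c :=
  Real.iSup_le (fun ρ => h ρ.1 ρ.2) hc

theorem norm_det_submatrix_le_minorNorm (A : Matrix (Fin m) (Fin n) ℤ_[p]) {i : ℕ}
    (f : Fin i → Fin m) (g : Fin i → Fin n) : ‖(A.submatrix f g).det‖ ≤ minorNorm A i :=
  le_ciSup (f := fun ρ : (Fin i → Fin m) × (Fin i → Fin n) => ‖(A.submatrix ρ.1 ρ.2).det‖)
    (Set.finite_range _).bddAbove (f, g)

theorem minorNorm_nonneg (A : Matrix (Fin m) (Fin n) ℤ_[p]) (i : ℕ) : 0 ≤ minorNorm A i :=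
  Real.iSup_nonneg fun _ => norm_nonneg _

theorem minorNorm_transpose (A : Matrix (Fin m) (Fin n) ℤ_[p]) (i : ℕ) :
    minorNorm Aᵀ i = minorNorm A i := by
  simp only [minorNorm, ← Matrix.transpose_submatrix, Matrix.det_transpose]
  exact (Equiv.prodComm _ _).iSup_comp
    (g := fun ρ : (Fin i → Fin m) × (Fin i → Fin n) => ‖(A.submatrix ρ.1 ρ.2).det‖)

theorem minorNorm_mul_le_right (U : Matrix (Fin l) (Fin m) ℤ_[p])
    (A : Matrix (Fin m) (Fin n) ℤ_[p]) (i : ℕ) : minorNorm (U * A) i ≤ minorNorm A i := by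
  refine minorNorm_le (minorNorm_nonneg _ _) fun f g => ?_
  rw [← Matrix.submatrix_mul_equiv U A f (Equiv.refl _) g,
    det_mul_eq_sum_prod_mul_det_submatrix]
  refine IsUltrametricDist.norm_sum_le_of_forall_le_of_nonneg (minorNorm_nonneg _ _)
    fun e _ => ?_
  rw [norm_mul]
  exact (mul_le_of_le_one_left (norm_nonneg _) (PadicInt.norm_le_one _)).trans
    (norm_det_submatrix_le_minorNorm A e g)

theorem minorNorm_mul_le_left (A : Matrix (Fin l) (Fin m) ℤ_[p])
    (V : Matrix (Fin m) (Fin n) ℤ_[p]) (i : ℕ) : minorNorm (A * V) i ≤ minorNorm A i := by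
  rw [← minorNorm_transpose, ← minorNorm_transpose A, Matrix.transpose_mul]
  exact minorNorm_mul_le_right _ _ _

theorem MatrixEquivalent.minorNorm_eq {A B : Matrix (Fin m) (Fin n) ℤ_[p]}
    (h : MatrixEquivalent A B) (i : ℕ) : minorNorm B i = minorNorm A i := by
  have hle {A B : Matrix (Fin m) (Fin n) ℤ_[p]} (h : MatrixEquivalent A B) :
      minorNorm B i ≤ minorNorm A i := by
    obtain ⟨U, V, rfl⟩ := h
    exact (minorNorm_mul_le_left _ _ _).trans (minorNorm_mul_le_right _ _ _)
  exact le_antisymm (hle h) (hle h.symm)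

variable {d : ℕ → ℤ_[p]}

theorem minorNorm_rectDiagonal_le (hd : Antitone fun j => ‖d j‖) (i : ℕ) :
    minorNorm (rectDiagonal m n d) i ≤ ∏ j ∈ Finset.range i, ‖d j‖ := by
  have hprod : 0 ≤ ∏ j ∈ Finset.range i, ‖d j‖ := Finset.prod_nonneg fun _ _ => norm_nonneg _
  refine minorNorm_le hprod fun f g => ?_
  by_cases hf : Function.Injective f
  · rw [Matrix.det_apply']
    refine IsUltrametricDist.norm_sum_le_of_forall_le_of_nonneg hprod fun σ _ => ?_
    have hinj : Function.Injective fun k => (f (σ k) : ℕ) :=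
      Fin.val_injective.comp (hf.comp σ.injective)
    have hentry (k : Fin i) : ‖(rectDiagonal m n d).submatrix f g (σ k) k‖ ≤ ‖d (f (σ k))‖ := by
      simp only [rectDiagonal, Matrix.submatrix_apply, Matrix.of_apply]
      split_ifs <;> simp
    calc _ ≤ ∏ k, ‖(rectDiagonal m n d).submatrix f g (σ k) k‖ := by
          rw [norm_mul, norm_prod]
          exact mul_le_of_le_one_left (Finset.prod_nonneg fun _ _ => norm_nonneg _)
            (PadicInt.norm_le_one _)
      _ ≤ ∏ k, ‖d (f (σ k))‖ :=
          Finset.prod_le_prod (fun _ _ => norm_nonneg _) fun k _ => hentry k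
      _ = ∏ j ∈ Finset.univ.image fun k => (f (σ k) : ℕ), ‖d j‖ :=
          (Finset.prod_image (f := (‖d ·‖)) hinj.injOn).symm
      _ ≤ ∏ j ∈ Finset.range i, ‖d j‖ := by
          simpa [Finset.card_image_of_injective _ hinj] using
            prod_le_prod_range_of_antitone hd (fun _ => norm_nonneg _)
              (Finset.univ.image fun k => (f (σ k) : ℕ))
  · obtain ⟨a, b, hab, hne⟩ := Function.not_injective_iff.1 hf
    rwa [Matrix.det_zero_of_row_eq hne (by ext; simp [hab]), norm_zero]

theorem prod_norm_le_minorNorm_rectDiagonal (hd : ∀ j, min m n ≤ j → d j = 0) (i : ℕ) :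
    ∏ j ∈ Finset.range i, ‖d j‖ ≤ minorNorm (rectDiagonal m n d) i := by
  rcases le_or_gt i (min m n) with hi | hi
  · obtain ⟨him, hin⟩ := le_min_iff.1 hi
    have hdiag : (rectDiagonal m n d).submatrix (Fin.castLE him) (Fin.castLE hin) =
        Matrix.diagonal fun k : Fin i => d k := by
      ext a b
      simp [rectDiagonal, Matrix.diagonal_apply, Fin.ext_iff]
    have h := norm_det_submatrix_le_minorNorm (rectDiagonal m n d) (Fin.castLE him)
      (Fin.castLE hin)
    rwa [hdiag, Matrix.det_diagonal, norm_prod, Fin.prod_univ_eq_prod_range (‖d ·‖)] at h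
  · rw [Finset.prod_eq_zero (Finset.mem_range.2 hi) (by rw [hd _ le_rfl, norm_zero])]
    exact minorNorm_nonneg _ _

theorem minorNorm_rectDiagonal (hd : Antitone fun j => ‖d j‖) (hzero : ∀ j, min m n ≤ j → d j = 0)
    (i : ℕ) : minorNorm (rectDiagonal m n d) i = ∏ j ∈ Finset.range i, ‖d j‖ :=
  (minorNorm_rectDiagonal_le hd i).antisymm (prod_norm_le_minorNorm_rectDiagonal hzero i)

/-- The ratio `‖Δ_i(A)‖ / ‖Δ_{i-1}(A)‖`; truncated subtraction makes it `1` for `i = 0`, and for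
`i ≥ 1` it is the norm of the `i`-th elementary divisor of `A`. -/
noncomputable def minorRatio (A : Matrix (Fin m) (Fin n) ℤ_[p]) (i : ℕ) : ℝ :=
  minorNorm A i / minorNorm A (i - 1)

theorem minorNorm_zero (A : Matrix (Fin m) (Fin n) ℤ_[p]) : minorNorm A 0 = 1 := by
  simp [minorNorm]

theorem minorRatio_zero (A : Matrix (Fin m) (Fin n) ℤ_[p]) : minorRatio A 0 = 1 := by
  simp [minorRatio, minorNorm_zero]

theorem minorRatio_nonneg (A : Matrix (Fin m) (Fin n) ℤ_[p]) (i : ℕ) : 0 ≤ minorRatio A i :=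
  div_nonneg (minorNorm_nonneg A i) (minorNorm_nonneg A (i - 1))

theorem norm_le_norm_iff_dvd {a b : ℤ_[p]} : ‖a‖ ≤ ‖b‖ ↔ b ∣ a := by
  refine ⟨fun h => ?_, ?_⟩
  · rcases eq_or_ne b 0 with rfl | hb
    · simpa using h
    · have hb' : (b : ℚ_[p]) ≠ 0 := PadicInt.coe_ne_zero.2 hb
      refine ⟨⟨a / b, ?_⟩, PadicInt.ext (mul_div_cancel₀ (a : ℚ_[p]) hb').symm⟩
      rw [norm_div]
      exact div_le_one_of_le₀ h (norm_nonneg _)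
  · rintro ⟨c, rfl⟩
    rw [norm_mul]
    exact mul_le_of_le_one_right (norm_nonneg b) (PadicInt.norm_le_one c)

theorem exists_rectDiagonal_norm_eq_minorRatio (A : Matrix (Fin m) (Fin n) ℤ_[p]) :
    ∃ d : ℕ → ℤ_[p], (∀ j, ‖d j‖ = minorRatio A (j + 1)) ∧ (Antitone fun j => ‖d j‖) ∧
      (∀ j, min m n ≤ j → d j = 0) ∧ MatrixEquivalent A (rectDiagonal m n d) := by
  obtain ⟨d, hdvd, hzero, hA⟩ := exists_matrixEquivalent_rectDiagonal A
  have hd : Antitone fun j => ‖d j‖ :=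
    antitone_nat_of_succ_le fun j => norm_le_norm_iff_dvd.2 (hdvd j)
  refine ⟨d, fun j => ?_, hd, hzero, hA⟩
  have hminor (i : ℕ) : minorNorm A i = ∏ k ∈ Finset.range i, ‖d k‖ :=
    (hA.minorNorm_eq i).symm.trans (minorNorm_rectDiagonal hd hzero i)
  rw [minorRatio, Nat.add_sub_cancel, hminor, hminor, Finset.prod_range_succ]
  rcases eq_or_ne (∏ k ∈ Finset.range j, ‖d k‖) 0 with h | h
  · obtain ⟨k, hk, hdk⟩ := Finset.prod_eq_zero_iff.1 h
    rw [h, div_zero]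
    exact ((hd (Finset.mem_range.1 hk).le).trans_eq hdk).antisymm (norm_nonneg _)
  · rw [mul_div_cancel_left₀ _ h]

theorem minorNorm_eq_prod_minorRatio (A : Matrix (Fin m) (Fin n) ℤ_[p]) (i : ℕ) :
    minorNorm A i = ∏ j ∈ Finset.range i, minorRatio A (j + 1) := by
  obtain ⟨d, hnorm, hd, hzero, hA⟩ := exists_rectDiagonal_norm_eq_minorRatio A
  rw [← hA.minorNorm_eq, minorNorm_rectDiagonal hd hzero]
  exact Finset.prod_congr rfl fun j _ => hnorm j

theorem exists_norm_eq_minorRatio (A : Matrix (Fin m) (Fin n) ℤ_[p]) (i : ℕ) :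
    ∃ x : ℤ_[p], ‖x‖ = minorRatio A i := by
  obtain ⟨d, hd, -⟩ := exists_rectDiagonal_norm_eq_minorRatio A
  cases i with
  | zero => exact ⟨1, by rw [norm_one, minorRatio_zero]⟩
  | succ i => exact ⟨d i, hd i⟩

theorem minorRatio_le_one (A : Matrix (Fin m) (Fin n) ℤ_[p]) (i : ℕ) : minorRatio A i ≤ 1 := by
  obtain ⟨x, hx⟩ := exists_norm_eq_minorRatio A i
  exact hx ▸ PadicInt.norm_le_one x

theorem antitone_minorRatio (A : Matrix (Fin m) (Fin n) ℤ_[p]) : Antitone (minorRatio A) := by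
  obtain ⟨d, hnorm, hd, -⟩ := exists_rectDiagonal_norm_eq_minorRatio A
  refine antitone_nat_of_succ_le fun i => ?_
  cases i with
  | zero => exact (minorRatio_le_one A 1).trans_eq (minorRatio_zero A).symm
  | succ i => exact hnorm i ▸ hnorm (i + 1) ▸ hd i.le_succ

theorem minorNorm_ne_zero_of_le {A : Matrix (Fin m) (Fin n) ℤ_[p]} {i r : ℕ} (hir : i ≤ r)
    (hr : minorNorm A r ≠ 0) : minorNorm A i ≠ 0 := by
  rw [minorNorm_eq_prod_minorRatio, Finset.prod_ne_zero_iff] at hr ⊢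
  exact fun j hj => hr j (Finset.range_mono hir hj)

theorem minorRatio_pow_le_minorNorm (A : Matrix (Fin m) (Fin n) ℤ_[p]) (i : ℕ) :
    minorRatio A i ^ i ≤ minorNorm A i := by
  calc minorRatio A i ^ i = ∏ _j ∈ Finset.range i, minorRatio A i := by simp
    _ ≤ ∏ j ∈ Finset.range i, minorRatio A (j + 1) :=
        Finset.prod_le_prod (fun _ _ => minorRatio_nonneg A i) fun j hj =>
          antitone_minorRatio A (Finset.mem_range.1 hj)
    _ = minorNorm A i := (minorNorm_eq_prod_minorRatio A i).symm

end Minors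

section Haar

variable {p : ℕ} [Fact p.Prime] {m n : ℕ}

instance : (padicHaar p).IsAddHaarMeasure := by
  unfold padicHaar; infer_instance

instance : IsProbabilityMeasure (padicHaar p) :=
  ⟨Measure.addHaarMeasure_self⟩

instance (N : ℕ) : (padicHaarPi p N).IsAddHaarMeasure := by
  unfold padicHaarPi; infer_instance

instance (N : ℕ) : IsProbabilityMeasure (padicHaarPi p N) := by
  unfold padicHaarPi; infer_instance

instance : (nhdsWithin (0 : ℤ_[p]) {0}ᶜ).NeBot := by
  rw [Filter.neBot_iff, Ne, ← isOpen_singleton_iff_punctured_nhds]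
  intro h
  have := discreteTopology_of_isOpen_singleton_zero h
  exact not_finite_iff_infinite.2 inferInstance (finite_of_compact_of_discrete (X := ℤ_[p]))

theorem measurableSet_norm_le {E : Type*} [SeminormedAddGroup E] [MeasurableSpace E]
    [OpensMeasurableSpace E] (c : ℝ) : MeasurableSet {x : E | ‖x‖ ≤ c} :=
  (isClosed_le continuous_norm continuous_const).measurableSet

theorem padicHaar_real_norm_le {c : ℤ_[p]} (hc : c ≠ 0) :
    (padicHaar p).real {x | ‖x‖ ≤ ‖c‖} = ‖c‖ := by
  set H : AddSubgroup ℤ_[p] :=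
    (PadicInt.toZModPow c.valuation : ℤ_[p] →+* ZMod (p ^ c.valuation)).toAddMonoidHom.ker with hH
  have hball : {x : ℤ_[p] | ‖x‖ ≤ ‖c‖} = H := by
    ext x
    rw [Set.mem_ofPred_eq, PadicInt.norm_eq_zpow_neg_valuation hc,
      PadicInt.norm_le_pow_iff_mem_span_pow, ← PadicInt.ker_toZModPow]
    rfl
  have hindex : H.index = p ^ c.valuation := by
    rw [hH, AddSubgroup.index_ker, AddMonoidHom.range_eq_top.2 (ZMod.ringHom_surjective _)]
    simp
  have hpow : p ^ c.valuation ≠ 0 := pow_ne_zero _ (Fact.out : p.Prime).ne_zero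
  have : H.FiniteIndex := ⟨hindex ▸ hpow⟩
  have h := congrArg ENNReal.toReal
    (H.index_mul_measure (hball ▸ measurableSet_norm_le _) (padicHaar p))
  rw [hindex, measure_univ, ENNReal.toReal_mul, ENNReal.toReal_natCast, ENNReal.toReal_one] at h
  rw [hball, PadicInt.norm_eq_zpow_neg_valuation hc, zpow_neg, zpow_natCast]
  exact eq_inv_of_mul_eq_one_right (by exact_mod_cast h)

theorem padicHaar_real_norm_mul_le {c d : ℤ_[p]} (hc : c ≠ 0) (hcd : ‖c‖ ≤ ‖d‖) :
    (padicHaar p).real {x | ‖d * x‖ ≤ ‖c‖} = ‖c‖ / ‖d‖ := by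
  obtain ⟨e, rfl⟩ := norm_le_norm_iff_dvd.1 hcd
  obtain ⟨hd, he⟩ := mul_ne_zero_iff.1 hc
  have hd' : 0 < ‖d‖ := norm_pos_iff.2 hd
  simp only [norm_mul, mul_le_mul_iff_right₀ hd', padicHaar_real_norm_le he,
    mul_div_cancel_left₀ _ hd'.ne']

theorem padicHaar_real_norm_mul_le_of_le {c d : ℤ_[p]} (hdc : ‖d‖ ≤ ‖c‖) :
    (padicHaar p).real {x | ‖d * x‖ ≤ ‖c‖} = 1 := by
  have huniv : {x | ‖d * x‖ ≤ ‖c‖} = Set.univ := Set.eq_univ_of_forall fun x => by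
    rw [Set.mem_ofPred_eq, norm_mul]
    exact (mul_le_of_le_one_right (norm_nonneg d) (PadicInt.norm_le_one x)).trans hdc
  rw [huniv, probReal_univ]

theorem measurable_mulVec {R X ι κ : Type*} [NonUnitalNonAssocSemiring R] [MeasurableSpace R]
    [MeasurableAdd₂ R] [MeasurableMul₂ R] [MeasurableSpace X] [Fintype κ] {Θ : X → Matrix ι κ R}
    (hΘ : ∀ i j, Measurable fun x => Θ x i j) {v : X → κ → R} (hv : Measurable v) :
    Measurable fun x => Θ x *ᵥ v x := by
  unfold Matrix.mulVec dotProduct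
  fun_prop

theorem norm_mulVec_le (A : Matrix (Fin m) (Fin n) ℤ_[p]) (b : Fin n → ℤ_[p]) :
    ‖A *ᵥ b‖ ≤ ‖b‖ := by
  refine (pi_norm_le_iff_of_nonneg (norm_nonneg _)).2 fun i => ?_
  rw [Matrix.mulVec, dotProduct]
  refine IsUltrametricDist.norm_sum_le_of_forall_le_of_nonneg (norm_nonneg b) fun j _ => ?_
  rw [norm_mul]
  exact (mul_le_of_le_one_left (norm_nonneg _) (PadicInt.norm_le_one _)).trans
    (norm_le_pi_norm b j)

theorem norm_units_mulVec (U : (Matrix (Fin m) (Fin m) ℤ_[p])ˣ) (b : Fin m → ℤ_[p]) :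
    ‖U.val *ᵥ b‖ = ‖b‖ := by
  refine le_antisymm (norm_mulVec_le _ _) ?_
  simpa using norm_mulVec_le U⁻¹.val (U.val *ᵥ b)

theorem measurePreserving_units_mulVec (V : (Matrix (Fin n) (Fin n) ℤ_[p])ˣ) :
    MeasurePreserving (V.val *ᵥ ·) (padicHaarPi p n) (padicHaarPi p n) :=
  AddMonoidHom.measurePreserving (f := (Matrix.mulVecLin V.val).toAddMonoidHom)
    (continuous_const.matrix_mulVec continuous_id) (fun b => ⟨V⁻¹.val *ᵥ b, by simp⟩) rfl

theorem MatrixEquivalent.padicHaarPi_real_norm_mulVec_le {A B : Matrix (Fin m) (Fin n) ℤ_[p]}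
    (h : MatrixEquivalent A B) (c : ℝ) :
    (padicHaarPi p n).real {b | ‖B *ᵥ b‖ ≤ c} = (padicHaarPi p n).real {b | ‖A *ᵥ b‖ ≤ c} := by
  obtain ⟨U, V, rfl⟩ := h
  have hmulVec : Measurable fun b : Fin n → ℤ_[p] => A *ᵥ b :=
    measurable_mulVec (Θ := fun _ => A) (fun _ _ => measurable_const) measurable_id
  have hmeas : MeasurableSet {b | ‖A *ᵥ b‖ ≤ c} := measurableSet_le hmulVec.norm measurable_const
  rw [← (measurePreserving_units_mulVec V).measureReal_preimage hmeas.nullMeasurableSet]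
  simp [← Matrix.mulVec_mulVec, norm_units_mulVec]

theorem norm_rectDiagonal_mulVec_le_iff {d : ℕ → ℤ_[p]} (hd : ∀ j, m ≤ j → d j = 0) {c : ℝ}
    (hc : 0 ≤ c) (b : Fin n → ℤ_[p]) :
    ‖rectDiagonal m n d *ᵥ b‖ ≤ c ↔ ∀ j : Fin n, ‖d j * b j‖ ≤ c := by
  rw [pi_norm_le_iff_of_nonneg hc]
  refine ⟨fun h j => ?_, fun h i => ?_⟩
  · rcases lt_or_ge (j : ℕ) m with hj | hj
    · simpa [Matrix.mulVec, dotProduct, rectDiagonal, Fin.val_inj] using h ⟨j, hj⟩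
    · simpa [hd j hj] using hc
  · rw [Matrix.mulVec, dotProduct]
    refine IsUltrametricDist.norm_sum_le_of_forall_le_of_nonneg hc fun j _ => ?_
    by_cases hij : (i : ℕ) = j
    · simpa [rectDiagonal, hij] using h j
    · simpa [rectDiagonal, hij] using hc

theorem padicHaarPi_real_norm_rectDiagonal_mulVec_le {d : ℕ → ℤ_[p]} {c : ℤ_[p]} {i : ℕ}
    (hd : ∀ j, m ≤ j → d j = 0) (hc : c ≠ 0) (hi : i ≤ n) (hlt : ∀ j < i, ‖c‖ ≤ ‖d j‖)
    (hge : ∀ j, i ≤ j → ‖d j‖ ≤ ‖c‖) :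
    (padicHaarPi p n).real {b | ‖rectDiagonal m n d *ᵥ b‖ ≤ ‖c‖} =
      ‖c‖ ^ i / ∏ j ∈ Finset.range i, ‖d j‖ := by
  have hbox : {b | ‖rectDiagonal m n d *ᵥ b‖ ≤ ‖c‖} =
      Set.univ.pi fun j : Fin n => {x | ‖d j * x‖ ≤ ‖c‖} := by
    ext b
    simp [norm_rectDiagonal_mulVec_le_iff hd (norm_nonneg c)]
  calc _ = ∏ j ∈ Finset.range n, (padicHaar p).real {x | ‖d j * x‖ ≤ ‖c‖} := by
        rw [hbox, measureReal_def, padicHaarPi, Measure.pi_pi, ENNReal.toReal_prod,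
          ← Fin.prod_univ_eq_prod_range]
        rfl
    _ = ∏ j ∈ Finset.range i, (padicHaar p).real {x | ‖d j * x‖ ≤ ‖c‖} :=
        (Finset.prod_subset (Finset.range_mono hi) fun j _ hj =>
          padicHaar_real_norm_mul_le_of_le (hge j (by simpa using hj))).symm
    _ = ∏ j ∈ Finset.range i, ‖c‖ / ‖d j‖ := Finset.prod_congr rfl fun j hj =>
        padicHaar_real_norm_mul_le hc (hlt j (Finset.mem_range.1 hj))
    _ = ‖c‖ ^ i / ∏ j ∈ Finset.range i, ‖d j‖ := by
        rw [Finset.prod_div_distrib, Finset.prod_const, Finset.card_range]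

theorem padicHaarPi_real_norm_mulVec_le (A : Matrix (Fin m) (Fin n) ℤ_[p]) {c : ℤ_[p]} {i : ℕ}
    (hc : c ≠ 0) (hlow : minorRatio A (i + 1) ≤ ‖c‖) (hup : ‖c‖ ≤ minorRatio A i) :
    (padicHaarPi p n).real {b | ‖A *ᵥ b‖ ≤ ‖c‖} = ‖c‖ ^ i / minorNorm A i := by
  obtain ⟨d, hnorm, hanti, hzero, hA⟩ := exists_rectDiagonal_norm_eq_minorRatio A
  have hlt (j : ℕ) (hj : j < i) : ‖c‖ ≤ ‖d j‖ :=
    hnorm j ▸ hup.trans (antitone_minorRatio A hj)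
  have hrank : i ≤ min m n := by
    by_contra! h
    simpa [hzero _ le_rfl, hc] using hlt _ h
  rw [← hA.padicHaarPi_real_norm_mulVec_le, ← hA.minorNorm_eq, minorNorm_rectDiagonal hanti hzero]
  exact padicHaarPi_real_norm_rectDiagonal_mulVec_le (fun j hj => hzero j (min_le_of_left_le hj))
    hc (hrank.trans (min_le_right m n)) hlt fun j hj => (hanti hj).trans ((hnorm i).trans_le hlow)

end Haar

section Series

theorem hasSum_indicator_Ioi_pow {q : ℝ} (hq : 0 ≤ q) (hq' : q < 1) (v : ℕ) :
    HasSum ((Set.Ioi v).indicator (q ^ ·)) (q ^ (v + 1) / (1 - q)) := by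
  have hhead : ∑ k ∈ Finset.range (v + 1), (Set.Ioi v).indicator (q ^ ·) k = 0 :=
    Finset.sum_eq_zero fun k hk => Set.indicator_of_notMem
      (not_lt.2 (Nat.lt_succ_iff.1 (Finset.mem_range.1 hk))) _
  have htail (k : ℕ) : (Set.Ioi v).indicator (q ^ ·) (k + (v + 1)) = q ^ (v + 1) * q ^ k := by
    rw [Set.indicator_of_mem (Set.mem_Ioi.2 (by omega)), pow_add, mul_comm]
  rw [← hasSum_nat_add_iff' (v + 1), hhead, sub_zero, div_eq_mul_inv]
  simpa only [htail] using (hasSum_geometric_of_lt_one hq hq').mul_left (q ^ (v + 1))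

variable {p : ℕ} [Fact p.Prime]

theorem hasSum_indicator_Iio_norm (x : ℤ_[p]) {w : ℝ} (hw : 0 < w) :
    HasSum (fun k : ℕ => (Set.Iio ‖x‖).indicator (· ^ w) ‖(p : ℤ_[p]) ^ k‖)
      (‖x‖ ^ w / ((p : ℝ) ^ w - 1)) := by
  rcases eq_or_ne x 0 with rfl | hx
  · convert hasSum_zero with k
    · exact Set.indicator_of_notMem (by simp) _
    · rw [norm_zero, Real.zero_rpow hw.ne', zero_div]
  have hp : 1 < (p : ℝ) := Nat.one_lt_cast.2 (Fact.out : p.Prime).one_lt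
  have hpw : 1 < (p : ℝ) ^ w := Real.one_lt_rpow hp hw
  have hxv : ‖x‖ = ‖(p : ℤ_[p]) ^ x.valuation‖ := by
    rw [PadicInt.norm_p_pow, PadicInt.norm_eq_zpow_neg_valuation hx]
  have hpow (k : ℕ) : ‖(p : ℤ_[p]) ^ k‖ ^ w = (((p : ℝ) ^ w)⁻¹) ^ k := by
    rw [PadicInt.norm_p_pow, zpow_neg, zpow_natCast, Real.inv_rpow (by positivity), inv_pow,
      Real.rpow_pow_comm (by positivity)]
  have hlt (k : ℕ) : ‖(p : ℤ_[p]) ^ k‖ < ‖x‖ ↔ x.valuation < k := by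
    rw [hxv, PadicInt.norm_p_pow, PadicInt.norm_p_pow, zpow_lt_zpow_iff_right₀ hp]
    omega
  convert hasSum_indicator_Ioi_pow (by positivity) (inv_lt_one_of_one_lt₀ hpw) x.valuation
    using 1
  · ext k
    simp only [Set.indicator_apply, Set.mem_Iio, Set.mem_Ioi, hlt, hpow]
  · have := (sub_pos.2 hpw).ne'
    rw [hxv, hpow, pow_succ]
    field_simp

theorem hasSum_indicator_Ico_norm {x y : ℤ_[p]} (hxy : ‖x‖ ≤ ‖y‖) {w : ℝ} (hw : 0 < w) :
    HasSum (fun k : ℕ => (Set.Ico ‖x‖ ‖y‖).indicator (· ^ w) ‖(p : ℤ_[p]) ^ k‖)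
      ((‖y‖ ^ w - ‖x‖ ^ w) / ((p : ℝ) ^ w - 1)) := by
  have hIco : Set.Ico ‖x‖ ‖y‖ = Set.Iio ‖y‖ \ Set.Iio ‖x‖ := by
    ext t
    simp
  simp only [hIco, Set.indicator_sdiff (Set.Iio_subset_Iio hxy), sub_div]
  exact (hasSum_indicator_Iio_norm y hw).sub (hasSum_indicator_Iio_norm x hw)

theorem exists_norm_eq_norm_pi {ι : Type*} [Fintype ι] (v : ι → ℤ_[p]) :
    ∃ x : ℤ_[p], ‖x‖ = ‖v‖ := by
  rcases isEmpty_or_nonempty ι with h | h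
  · exact ⟨0, by rw [Subsingleton.elim v 0, norm_zero, norm_zero]⟩
  · obtain ⟨i, hi⟩ := Finite.exists_max fun i => ‖v i‖
    exact ⟨v i, (norm_le_pi_norm v i).antisymm ((pi_norm_le_iff_of_nonneg (norm_nonneg _)).2 hi)⟩

theorem hasSum_mul_measureReal {Ω : Type*} [MeasurableSpace Ω] {μ : Measure Ω} [IsFiniteMeasure μ]
    {S : ℕ → Set Ω} (hS : ∀ k, MeasurableSet (S k)) {a : ℕ → ℝ} (ha : ∀ k, 0 ≤ a k)
    (ha_summable : Summable a) :
    HasSum (fun k => a k * μ.real (S k))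
      (∫ ω, ∑' k, (S k).indicator (fun _ => a k) ω ∂μ) := by
  have hintegral (k : ℕ) : ∫ ω, (S k).indicator (fun _ => a k) ω ∂μ = a k * μ.real (S k) := by
    rw [integral_indicator_const _ (hS k), smul_eq_mul, mul_comm]
  have hnorm (k : ℕ) (ω : Ω) :
      ‖(S k).indicator (fun _ => a k) ω‖ = (S k).indicator (fun _ => a k) ω :=
    Real.norm_of_nonneg (Set.indicator_nonneg (fun _ _ => ha k) ω)
  have hsummable : Summable fun k => ∫ ω, ‖(S k).indicator (fun _ => a k) ω‖ ∂μ := by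
    simp only [hnorm, hintegral]
    exact (ha_summable.mul_right (μ.real Set.univ)).of_nonneg_of_le
      (fun k => mul_nonneg (ha k) measureReal_nonneg) fun k =>
        mul_le_mul_of_nonneg_left (measureReal_mono (Set.subset_univ _)) (ha k)
  simpa only [hintegral] using hasSum_integral_of_summable_integral_norm
    (fun k => (integrable_const (a k)).indicator (hS k)) hsummable

section LayerCake

variable {Ω ι : Type*} [MeasurableSpace Ω] [Fintype ι] {μ : Measure Ω} {v : Ω → ι → ℤ_[p]}

theorem integrable_norm_rpow [IsFiniteMeasure μ] (hv : Measurable v) {s : ℝ} (hs : 0 ≤ s) :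
    Integrable (fun ω => ‖v ω‖ ^ s) μ := by
  refine Integrable.of_bound (hv.norm.pow_const s).aestronglyMeasurable 1 (ae_of_all _ fun ω => ?_)
  rw [Real.norm_of_nonneg (Real.rpow_nonneg (norm_nonneg _) s)]
  exact Real.rpow_le_one (norm_nonneg _)
    ((pi_norm_le_iff_of_nonneg zero_le_one).2 fun i => PadicInt.norm_le_one (v ω i)) hs

/-- A discrete layer-cake formula: up to the factor `p ^ s - 1`, `1 - ‖x‖ ^ s` is the sum of
`t ^ s` over the norms `t` in `[‖x‖, 1)`. -/
theorem hasSum_indicator_mul_measureReal_norm_le [IsProbabilityMeasure μ] (hv : Measurable v)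
    {s : ℝ} (hs : 0 < s) :
    HasSum (fun k : ℕ => (Set.Iio 1).indicator (· ^ s) ‖(p : ℤ_[p]) ^ k‖ *
        μ.real {ω | ‖v ω‖ ≤ ‖(p : ℤ_[p]) ^ k‖})
      ((1 - ∫ ω, ‖v ω‖ ^ s ∂μ) / ((p : ℝ) ^ s - 1)) := by
  set t : ℕ → ℝ := fun k => ‖(p : ℤ_[p]) ^ k‖
  set a : ℕ → ℝ := fun k => (Set.Iio 1).indicator (· ^ s) (t k)
  have ha_nonneg (k : ℕ) : 0 ≤ a k :=
    Set.indicator_apply_nonneg fun _ => Real.rpow_nonneg (norm_nonneg _) s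
  have ha_summable : Summable a := by
    simpa only [norm_one] using (hasSum_indicator_Iio_norm (1 : ℤ_[p]) hs).summable
  have hlayers (ω : Ω) :
      HasSum (fun k => {ω | ‖v ω‖ ≤ t k}.indicator (fun _ => a k) ω)
        ((1 - ‖v ω‖ ^ s) / ((p : ℝ) ^ s - 1)) := by
    obtain ⟨x, hx⟩ := exists_norm_eq_norm_pi (v ω)
    convert hasSum_indicator_Ico_norm (x := x) (y := 1)
      ((PadicInt.norm_le_one x).trans_eq norm_one.symm) hs using 2 with k
    · simp only [a, t, Set.indicator_apply, Set.mem_ofPred_eq, Set.mem_Iio, Set.mem_Ico, hx,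
        norm_one, ite_and]
    · rw [norm_one, Real.one_rpow, hx]
  have hsum := hasSum_mul_measureReal (μ := μ)
    (fun k => measurableSet_le hv.norm (measurable_const (a := t k))) ha_nonneg ha_summable
  simpa only [(hlayers _).tsum_eq, integral_div,
    integral_sub (integrable_const _) (integrable_norm_rpow hv hs.le), integral_const,
    probReal_univ, one_smul] using hsum

end LayerCake

theorem exists_mem_Ico_succ_of_antitone {α : Type*} [LinearOrder α] {f : ℕ → α} {t : α} {N : ℕ}
    (hN : f N ≤ t) (h0 : t < f 0) : ∃ i < N, t ∈ Set.Ico (f (i + 1)) (f i) := by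
  classical
  have h : ∃ k, f k ≤ t := ⟨N, hN⟩
  have hpos : Nat.find h ≠ 0 := fun h' => (h' ▸ Nat.find_spec h).not_gt h0
  obtain ⟨i, hi⟩ := Nat.exists_eq_succ_of_ne_zero hpos
  have hfind : f (i + 1) ≤ t := by simpa only [hi] using Nat.find_spec h
  refine ⟨i, ?_, hfind, not_le.1 (Nat.find_min h (hi ▸ i.lt_succ_self))⟩
  exact Nat.lt_of_succ_le (hi ▸ Nat.find_min' h hN)

variable {m n : ℕ} {A : Matrix (Fin m) (Fin n) ℤ_[p]} {r : ℕ}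

theorem indicator_mul_padicHaarPi_real_norm_mulVec_le (hr : minorNorm A (r + 1) = 0) {c : ℤ_[p]}
    (hc : c ≠ 0) (s : ℝ) :
    (Set.Iio 1).indicator (· ^ s) ‖c‖ * (padicHaarPi p n).real {b | ‖A *ᵥ b‖ ≤ ‖c‖} =
      ∑ i ∈ Finset.range (r + 1), (Set.Ico (minorRatio A (i + 1)) (minorRatio A i)).indicator
        (· ^ (s + i)) ‖c‖ / minorNorm A i := by
  have hc' : 0 < ‖c‖ := norm_pos_iff.2 hc
  by_cases hc1 : ‖c‖ < 1
  · have hlast : minorRatio A (r + 1) ≤ ‖c‖ := by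
      rw [minorRatio, hr, zero_div]
      exact hc'.le
    obtain ⟨i, hi, hmem⟩ :=
      exists_mem_Ico_succ_of_antitone hlast (hc1.trans_eq (minorRatio_zero A).symm)
    rw [Finset.sum_eq_single_of_mem i (Finset.mem_range.2 hi), Set.indicator_of_mem hmem,
      Set.indicator_of_mem (Set.mem_Iio.2 hc1),
      padicHaarPi_real_norm_mulVec_le A hc hmem.1 hmem.2.le, Real.rpow_add hc',
      Real.rpow_natCast, mul_div_assoc]
    intro j _ hji
    rw [Set.indicator_of_notMem, zero_div]
    exact Set.disjoint_left.1 ((antitone_minorRatio A).pairwise_disjoint_on_Ico_succ hji.symm) hmem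
  · rw [Set.indicator_of_notMem (by exact hc1), zero_mul, Finset.sum_eq_zero]
    intro i _
    rw [Set.indicator_of_notMem, zero_div]
    exact fun h => hc1 (h.2.trans_le (minorRatio_le_one A i))

theorem zpow_mul_one_sub_rpow_neg_div {q : ℝ} (hq : 1 < q) {s : ℝ} (hs : 0 < s) (i : ℕ) :
    q ^ (-(i : ℤ)) * (1 - q ^ (-s)) / (1 - q ^ (-(s + i))) = (q ^ s - 1) / (q ^ (s + i) - 1) := by
  have hq0 : 0 < q := zero_lt_one.trans hq
  have hqsi : 1 < q ^ (s + i) := Real.one_lt_rpow hq (by positivity)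
  have hne : q ^ (s + i) - 1 ≠ 0 := (sub_pos.2 hqsi).ne'
  have hne' : 1 - (q ^ (s + i))⁻¹ ≠ 0 := (sub_pos.2 (inv_lt_one_of_one_lt₀ hqsi)).ne'
  rw [zpow_neg, zpow_natCast, Real.rpow_neg hq0.le, Real.rpow_neg hq0.le, div_eq_div_iff hne' hne,
    Real.rpow_add hq0, Real.rpow_natCast]
  field_simp

/-- When `minorNorm A i = 0` the `i`-th term vanishes through `x / 0 = 0`. -/
theorem integral_norm_mulVec_rpow (hr : minorNorm A (r + 1) = 0) {s : ℝ} (hs : 0 < s) :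
    ∫ b, ‖A *ᵥ b‖ ^ s ∂padicHaarPi p n =
      1 - ∑ i ∈ Finset.range (r + 1),
        (p : ℝ) ^ (-(i : ℤ)) * (1 - (p : ℝ) ^ (-s)) / (1 - (p : ℝ) ^ (-(s + i))) *
          ((minorRatio A i ^ (s + i) - minorRatio A (i + 1) ^ (s + i)) / minorNorm A i) := by
  have hp : 1 < (p : ℝ) := Nat.one_lt_cast.2 (Fact.out : p.Prime).one_lt
  choose d hd using exists_norm_eq_minorRatio A
  have hmulVec : Measurable fun b : Fin n → ℤ_[p] => A *ᵥ b :=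
    measurable_mulVec (Θ := fun _ => A) (fun _ _ => measurable_const) measurable_id
  have hlayer := hasSum_indicator_mul_measureReal_norm_le (μ := padicHaarPi p n) hmulVec hs
  simp only [indicator_mul_padicHaarPi_real_norm_mulVec_le hr
    (pow_ne_zero _ (PadicInt.prime_p.ne_zero)), ← hd] at hlayer
  have hsum := hasSum_sum fun i (_ : i ∈ Finset.range (r + 1)) =>
    (hasSum_indicator_Ico_norm (x := d (i + 1)) (y := d i)
      (hd (i + 1) ▸ hd i ▸ antitone_minorRatio A i.le_succ)
      (by positivity : 0 < s + i)).div_const (minorNorm A i)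
  have hne : (p : ℝ) ^ s - 1 ≠ 0 := (sub_pos.2 (Real.one_lt_rpow hp hs)).ne'
  calc ∫ b, ‖A *ᵥ b‖ ^ s ∂padicHaarPi p n
      = 1 - (1 - ∫ b, ‖A *ᵥ b‖ ^ s ∂padicHaarPi p n) / ((p : ℝ) ^ s - 1) * ((p : ℝ) ^ s - 1) := by
        rw [div_mul_cancel₀ _ hne, sub_sub_cancel]
    _ = _ := by
        rw [hlayer.unique hsum, Finset.sum_mul]
        refine congrArg (1 - ·) (Finset.sum_congr rfl fun i _ => ?_)
        rw [zpow_mul_one_sub_rpow_neg_div hp hs, hd, hd]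
        ring

theorem abs_minorRatio_rpow_sub_div_minorNorm_le_one (A : Matrix (Fin m) (Fin n) ℤ_[p]) {s : ℝ}
    (hs : 0 ≤ s) (i : ℕ) :
    |(minorRatio A i ^ (s + i) - minorRatio A (i + 1) ^ (s + i)) / minorNorm A i| ≤ 1 := by
  have hanti : minorRatio A (i + 1) ^ (s + i) ≤ minorRatio A i ^ (s + i) :=
    Real.rpow_le_rpow (minorRatio_nonneg A _) (antitone_minorRatio A i.le_succ) (by positivity)
  have hnonneg : 0 ≤ minorRatio A (i + 1) ^ (s + i) := Real.rpow_nonneg (minorRatio_nonneg A _) _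
  have hle : minorRatio A i ^ (s + i) ≤ minorNorm A i :=
    calc minorRatio A i ^ (s + i) ≤ minorRatio A i ^ (i : ℝ) :=
          Real.rpow_le_rpow_of_exponent_ge' (minorRatio_nonneg A i) (minorRatio_le_one A i)
            i.cast_nonneg (le_add_of_nonneg_left hs)
      _ = minorRatio A i ^ i := Real.rpow_natCast _ i
      _ ≤ minorNorm A i := minorRatio_pow_le_minorNorm A i
  rw [abs_of_nonneg (div_nonneg (sub_nonneg.2 hanti) (minorNorm_nonneg A i))]
  exact div_le_one_of_le₀ (by linarith) (minorNorm_nonneg A i)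

end Series

section GenericRank

theorem measure_eq_zero_of_forall_translate {G T : Type*} [AddGroup G] [MeasurableSpace G]
    [MeasurableAdd₂ G] [MeasurableSpace T] (μ : Measure G) [SFinite μ] [μ.IsAddRightInvariant]
    (ν : Measure T) [SFinite ν] [NeZero ν] {g : T → G} (hg : Measurable g) {Z : Set G}
    (hZ : MeasurableSet Z) (hnull : ∀ x, ν {t | x + g t ∈ Z} = 0) : μ Z = 0 := by
  have hmeas : MeasurableSet {q : G × T | q.1 + g q.2 ∈ Z} :=
    (measurable_fst.add (hg.comp measurable_snd)) hZ
  have hslice (t : T) : μ {x | x + g t ∈ Z} = μ Z := measure_preimage_add_right μ (g t) Z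
  have hprod := (Measure.prod_apply (μ := μ) (ν := ν) hmeas).symm.trans
    (Measure.prod_apply_symm hmeas)
  simpa [Set.preimage, hslice, hnull, NeZero.ne ν] using hprod

theorem finite_setOf_det_add_smul_eq_zero {R : Type*} [CommRing R] [IsDomain R] {ι : Type*}
    [Fintype ι] [DecidableEq ι] (A B : Matrix ι ι R) (hB : B.det ≠ 0) :
    {t : R | (A + t • B).det = 0}.Finite := by
  open Polynomial in
  set P : R[X] := ((X : R[X]) • B.map C + A.map C).det with hP
  have hP0 : P ≠ 0 := fun h => hB <| by
    rw [← coeff_det_X_add_C_card B A, ← hP, h, coeff_zero]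
  refine (finite_setOfPred_isRoot hP0).subset fun t ht => ?_
  have heval : P.eval t = (A + t • B).det := by
    rw [hP, ← coe_evalRingHom, RingHom.map_det]
    congr 1
    ext a b
    simp [add_comm, mul_comm t]
  exact heval.trans ht

variable {p : ℕ} [Fact p.Prime] {m n : ℕ}

theorem exists_det_submatrix_ne_zero {A : Matrix (Fin m) (Fin n) ℤ_[p]} {r : ℕ}
    (hA : minorNorm A r ≠ 0) : ∃ f g, (A.submatrix f g : Matrix (Fin r) (Fin r) ℤ_[p]).det ≠ 0 := by
  by_contra! h
  refine hA (le_antisymm (minorNorm_le le_rfl fun f g => ?_) (minorNorm_nonneg _ _))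
  rw [h f g, norm_zero]

theorem measurable_minorNorm {X : Type*} [MeasurableSpace X]
    {Θ : X → Matrix (Fin m) (Fin n) ℤ_[p]} (hΘ : ∀ i j, Measurable fun x => Θ x i j) (k : ℕ) :
    Measurable fun x => minorNorm (Θ x) k := by
  refine Measurable.iSup fun ρ => Measurable.norm ?_
  simp only [Matrix.det_apply, Matrix.submatrix_apply]
  fun_prop

variable {N : ℕ} (θ : (Fin N → ℤ_[p]) →ₗ[ℤ_[p]] Matrix (Fin m) (Fin n) ℤ_[p])

theorem measurable_linearMap_apply_apply (i : Fin m) (j : Fin n) : Measurable fun x => θ x i j :=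
  ((LinearMap.continuous_on_pi θ).matrix_elem i j).measurable

theorem ae_minorNorm_ne_zero {r : ℕ} (hr : ∃ x, minorNorm (θ x) r ≠ 0) :
    ∀ᵐ x ∂padicHaarPi p N, minorNorm (θ x) r ≠ 0 := by
  obtain ⟨y, hy⟩ := hr
  obtain ⟨f, g, hfg⟩ := exists_det_submatrix_ne_zero hy
  have hZ : MeasurableSet {x | minorNorm (θ x) r = 0} :=
    measurable_minorNorm (measurable_linearMap_apply_apply θ) r (measurableSet_singleton 0)
  have hsmul : Measurable fun t : ℤ_[p] => t • y := (continuous_id.smul continuous_const).measurable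
  simp only [ae_iff, not_not]
  refine measure_eq_zero_of_forall_translate _ (padicHaar p) hsmul hZ fun x => ?_
  refine ((finite_setOf_det_add_smul_eq_zero ((θ x).submatrix f g) _ hfg).subset
    fun t ht => ?_).measure_zero _
  have h := (norm_det_submatrix_le_minorNorm (θ (x + t • y)) f g).trans_eq ht
  rw [map_add, map_smul] at h
  exact norm_le_zero_iff.1 h

end GenericRank

section Integral

variable {p : ℕ} [Fact p.Prime] {m n r : ℕ} {X : Type*} [MeasurableSpace X] {ν : Measure X}
  {Θ : X → Matrix (Fin m) (Fin n) ℤ_[p]}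

theorem integrable_minorRatio_rpow_sub_div_minorNorm [IsFiniteMeasure ν]
    (hΘ : ∀ i j, Measurable fun x => Θ x i j) {s : ℝ} (hs : 0 ≤ s) (i : ℕ) :
    Integrable (fun x => (minorRatio (Θ x) i ^ (s + i) - minorRatio (Θ x) (i + 1) ^ (s + i)) /
      minorNorm (Θ x) i) ν := by
  have hnorm := measurable_minorNorm hΘ
  have hratio (k : ℕ) : Measurable fun x => minorRatio (Θ x) k := (hnorm k).div (hnorm (k - 1))
  refine Integrable.of_bound (Measurable.aestronglyMeasurable ?_) 1
    (ae_of_all _ fun x => abs_minorRatio_rpow_sub_div_minorNorm_le_one (Θ x) hs i)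
  exact (((hratio i).pow_const _).sub ((hratio (i + 1)).pow_const _)).div (hnorm i)

theorem igusa_zeta_formula_general [IsProbabilityMeasure ν]
    (hΘ : ∀ i j, Measurable fun x => Θ x i j) (hr : ∀ᵐ x ∂ν, minorNorm (Θ x) (r + 1) = 0)
    (hr' : ∀ᵐ x ∂ν, minorNorm (Θ x) r ≠ 0) {s : ℝ} (hs : 0 < s) :
    ∫ z, ‖Θ z.1 *ᵥ z.2‖ ^ s ∂ν.prod (padicHaarPi p n) =
      1 - ∑ i ∈ Finset.range (r + 1),
        (p : ℝ) ^ (-(i : ℤ)) * (1 - (p : ℝ) ^ (-s)) / (1 - (p : ℝ) ^ (-(s + i))) *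
          ∫ x in {x | minorNorm (Θ x) r ≠ 0}, (minorRatio (Θ x) i ^ (s + i) -
            minorRatio (Θ x) (i + 1) ^ (s + i)) / minorNorm (Θ x) i ∂ν := by
  have hterm (i : ℕ) (_ : i ∈ Finset.range (r + 1)) :=
    (integrable_minorRatio_rpow_sub_div_minorNorm (ν := ν) hΘ hs.le i).const_mul
      ((p : ℝ) ^ (-(i : ℤ)) * (1 - (p : ℝ) ^ (-s)) / (1 - (p : ℝ) ^ (-(s + i))))
  have hmulVec : Measurable fun z : X × (Fin n → ℤ_[p]) => Θ z.1 *ᵥ z.2 :=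
    measurable_mulVec (fun i j => (hΘ i j).comp measurable_fst) measurable_snd
  have hrestrict : ν.restrict {x | minorNorm (Θ x) r ≠ 0} = ν :=
    Measure.restrict_eq_self_of_ae_mem hr'
  rw [integral_prod _ (integrable_norm_rpow hmulVec hs.le),
    integral_congr_ae (hr.mono fun x hx => integral_norm_mulVec_rpow hx hs),
    integral_sub (integrable_const _) (integrable_finsetSum _ hterm), integral_finsetSum _ hterm,
    integral_const, probReal_univ, one_smul, hrestrict]
  simp only [integral_const_mul]

end Integral

/-- the closed formula for the ASK/Igusa zeta integral.  Let
`θ : ℤ_p^{r_A} → M_{r_C × r_B}(ℤ_p)` be `ℤ_p`-linear, `r` the maximal rank of `θ(x)`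
over `ℚ_p`, and `U := {x : Δ_r(x) ≠ 0}`.  Then: on `U` every `Δ_i(x)` with `0 ≤ i ≤ r`
is nonzero; `U` has full Haar measure; and for every real `s > 0`,
`Z(s) := ∫ ‖θ(a)·b‖^s` equals
`1 − Σ_{i=0}^{r} [p^{−i}(1 − p^{−s})/(1 − p^{−(s+i)})] ·
  ∫_U ((‖Δ_i‖/‖Δ_{i−1}‖)^{s+i} − (‖Δ_{i+1}‖/‖Δ_i‖)^{s+i})·‖Δ_i‖⁻¹ dμ`
(with `‖Δ_{−1}‖ = ‖Δ_0‖ = 1` and `‖Δ_{r+1}‖ = 0`; note that `‖Δ_0‖/‖Δ_{0-1}‖ = 1` and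
that `minorNorm (θ x) (r+1) = 0`, so the natural-number indexing below realises these
conventions). -/
theorem igusa_zeta_formula (p : ℕ) [Fact p.Prime] (rA rB rC : ℕ)
    (hA : 1 ≤ rA) (hB : 1 ≤ rB) (hC : 1 ≤ rC)
    (θ : (Fin rA → ℤ_[p]) →ₗ[ℤ_[p]] Matrix (Fin rC) (Fin rB) ℤ_[p])
    (r : ℕ)
    (hr : ∀ x : Fin rA → ℤ_[p], minorNorm (θ x) (r + 1) = 0)
    (hr' : ∃ x : Fin rA → ℤ_[p], minorNorm (θ x) r ≠ 0)
    (s : ℝ) (hs : 0 < s) :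
    (∀ x ∈ {x : Fin rA → ℤ_[p] | minorNorm (θ x) r ≠ 0}, ∀ i ≤ r,
        minorNorm (θ x) i ≠ 0) ∧
    padicHaarPi p rA {x : Fin rA → ℤ_[p] | minorNorm (θ x) r ≠ 0}ᶜ = 0 ∧
    (∫ ab : (Fin rA → ℤ_[p]) × (Fin rB → ℤ_[p]),
        ‖(θ ab.1).mulVec ab.2‖ ^ s ∂((padicHaarPi p rA).prod (padicHaarPi p rB)))
      = 1 - ∑ i ∈ Finset.range (r + 1),
          ((p : ℝ) ^ (-(i : ℤ)) * (1 - (p : ℝ) ^ (-s)) / (1 - (p : ℝ) ^ (-(s + i))))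
            * ∫ x in {x : Fin rA → ℤ_[p] | minorNorm (θ x) r ≠ 0},
                ((minorNorm (θ x) i / minorNorm (θ x) (i - 1)) ^ (s + i)
                  - (minorNorm (θ x) (i + 1) / minorNorm (θ x) i) ^ (s + i))
                  / minorNorm (θ x) i ∂(padicHaarPi p rA) := by
  have hgeneric := ae_minorNorm_ne_zero θ hr'
  exact ⟨fun x hx i hi => minorNorm_ne_zero_of_le hi hx, hgeneric, igusa_zeta_formula_general
    (measurable_linearMap_apply_apply θ) (ae_of_all _ hr) hgeneric hs⟩
end

section
/- Let r ≥ 1 and let V be a finite set of r vertices. For each i ∈ V let g_i ≥ 2 be an integer; for each unordered pair {i,j} of distinct vertices let R_{ij} ≥ 1 be an integer; for each i let d_i ≥ 1 be an integer together with positive integers m_{i,1}, …, m_{i,h_i} (h_i ≥ 1) satisfying Σ_{s=1}^{h_i} m_{i,s} = d_i. Set ⟨d,d⟩ := Σ_{i∈V} (1 − g_i) d_i² − Σ_{{i,j}, i≠j} R_{ij} d_i d_j, r₁ := #{ i : d_i = 1 } and r₂ := #{ i : d_i ≥ 2 }. Then 2·(1 − ⟨d,d⟩ − Σ_i g_i)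 − ( Σ_i d_i² − 1 + 1 − ⟨d,d⟩ + Σ_i Σ_{s=2}^{h_i} m_{i,s} m_{i,s−1} − Σ_i g_i·Σ_{s=1}^{h_i} m_{i,s}² ) ≥ Σ_i (d_i − 1) + 2(r₂ − 1)(r − 1) + r₁(r₁ − 1)/2. -/
/-!
Expanding the Euler form turns the right-hand side into `2`, plus one term for each vertex, plus
half of `∑ R i j * d i * d j` over ordered pairs of distinct vertices.

The vertex term depends on the parts `m 1, …, m h` of `d i` through
`∑ s, m s ^ 2 - ∑ s, m s * m (s - 1)`, the Tits form of the Dynkin diagram `A_h`. That form is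
positive definite, so at integer vectors other than `0` it is at least `1`; together with
`m s ≤ m s ^ 2` and `2 ≤ g i` this makes each vertex term at least `d i - 3`, whatever the signs
of the parts.

In the sum over pairs one may replace `R i j` by `1` and `d i` by `min (d i) 2`; the result depends
only on `r₁` and `r₂`, and the bounds then add up exactly to the left-hand side.
-/

section

open Finset

theorem two_mul_sum_sq_sub_sum_mul_pred {A : Type*} [CommRing A] (m : ℕ → A) {h : ℕ}
    (hh : 1 ≤ h) :
    2 * (∑ s ∈ Icc 1 h, m s ^ 2 - ∑ s ∈ Icc 2 h, m s * m (s - 1))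
      = m 1 ^ 2 + m h ^ 2 + ∑ s ∈ Icc 2 h, (m s - m (s - 1)) ^ 2 := by
  induction h, hh using Nat.le_induction with
  | base => simp [two_mul]
  | succ n hn ih =>
    simp only [sum_Icc_succ_top (show 1 ≤ n + 1 by lia), sum_Icc_succ_top (show 2 ≤ n + 1 by lia),
      Nat.add_sub_cancel]
    linear_combination ih

theorem sum_mul_pred_lt_sum_sq {A : Type*} [CommRing A] [LinearOrder A] [IsStrictOrderedRing A]
    {m : ℕ → A} {h : ℕ} (hm : ∃ s ∈ Icc 1 h, m s ≠ 0) :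
    ∑ s ∈ Icc 2 h, m s * m (s - 1) < ∑ s ∈ Icc 1 h, m s ^ 2 := by
  obtain ⟨t, ht, hmt⟩ := hm
  obtain ⟨ht_one, ht_le⟩ := mem_Icc.mp ht
  have hid := two_mul_sum_sq_sub_sum_mul_pred m (ht_one.trans ht_le)
  have hdiff_nonneg : ∀ s ∈ Icc 2 h, 0 ≤ (m s - m (s - 1)) ^ 2 := fun s _ => sq_nonneg _
  by_contra! hle
  have hfirst : m 1 = 0 := by
    refine pow_eq_zero_iff two_ne_zero |>.mp (le_antisymm ?_ (sq_nonneg _))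
    linarith [sq_nonneg (m h), sum_nonneg hdiff_nonneg]
  have hdiff : ∑ s ∈ Icc 2 h, (m s - m (s - 1)) ^ 2 = 0 :=
    le_antisymm (by linarith [sq_nonneg (m 1), sq_nonneg (m h)]) (sum_nonneg hdiff_nonneg)
  have hconst : ∀ s ∈ Icc 2 h, m s = m (s - 1) := fun s hs =>
    sub_eq_zero.mp (pow_eq_zero_iff two_ne_zero |>.mp
      ((sum_eq_zero_iff_of_nonneg hdiff_nonneg).mp hdiff s hs))
  have hzero : ∀ s, 1 ≤ s → s ≤ h → m s = 0 := fun s hs => by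
    induction s, hs using Nat.le_induction with
    | base => exact fun _ => hfirst
    | succ n hn ih =>
      intro hnh
      rw [hconst (n + 1) (mem_Icc.mpr ⟨by lia, hnh⟩), Nat.add_sub_cancel, ih (by lia)]
  exact hmt (hzero t ht_one ht_le)

section Pairs

variable {V : Type*}

theorem sum_offDiag_mul {A : Type*} [CommRing A] (s : Finset V) (a : V → A) :
    ∑ p ∈ s.offDiag, a p.1 * a p.2 = (∑ i ∈ s, a i) ^ 2 - ∑ i ∈ s, a i ^ 2 := by
  classical
  have hsplit : (∑ i ∈ s, a i) ^ 2 = ∑ i ∈ s, a i ^ 2 + ∑ p ∈ s.offDiag, a p.1 * a p.2 := by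
    simp only [sq, sum_mul_sum]
    rw [← sum_product', ← diag_union_offDiag, sum_union (disjoint_diag_offDiag _), sum_diag]
  exact eq_sub_of_add_eq' hsplit.symm

variable {K : Type*} [CommRing K] [LinearOrder K] [IsStrictOrderedRing K]

theorem sum_offDiag_mul_le_of_one_le (s : Finset V) {R : V → V → K}
    (hR : ∀ i j, i ≠ j → 1 ≤ R i j) {a b : V → K} (ha : ∀ i, 0 ≤ a i) (hab : ∀ i, a i ≤ b i) :
    ∑ p ∈ s.offDiag, a p.1 * a p.2 ≤ ∑ p ∈ s.offDiag, R p.1 p.2 * b p.1 * b p.2 := by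
  refine sum_le_sum fun p hp => ?_
  have hb : ∀ i, 0 ≤ b i := fun i => (ha i).trans (hab i)
  calc a p.1 * a p.2 ≤ b p.1 * b p.2 := mul_le_mul (hab _) (hab _) (ha _) (hb _)
    _ ≤ R p.1 p.2 * (b p.1 * b p.2) :=
        le_mul_of_one_le_left (mul_nonneg (hb _) (hb _)) (hR _ _ (mem_offDiag.mp hp).2.2)
    _ = R p.1 p.2 * b p.1 * b p.2 := (mul_assoc _ _ _).symm

variable [Fintype V]

theorem sum_min_two {M : Type*} [AddCommMonoid M] {d : V → ℕ} (hd : ∀ i, 1 ≤ d i) (f : ℕ → M) :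
    ∑ i, f (min (d i) 2) = #{i | d i = 1} • f 1 + #{i | 2 ≤ d i} • f 2 := by
  have hnot : ∀ i, ¬d i = 1 ↔ 2 ≤ d i := fun i => by have := hd i; lia
  rw [← sum_filter_add_sum_filter_not univ (fun i => d i = 1)]
  simp only [hnot]
  congr 1 <;> refine sum_eq_card_nsmul fun i hi => ?_
  · rw [(mem_filter.mp hi).2, min_eq_left one_le_two]
  · rw [min_eq_right (mem_filter.mp hi).2]

theorem card_eq_card_eq_one_add_card_two_le {d : V → ℕ} (hd : ∀ i, 1 ≤ d i) :
    Fintype.card V = #{i | d i = 1} + #{i | 2 ≤ d i} := by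
  simpa using sum_min_two hd fun _ => (1 : ℕ)

theorem le_sum_offDiag_mul_natCast {R : V → V → K} (hR : ∀ i j, i ≠ j → 1 ≤ R i j) {d : V → ℕ}
    (hd : ∀ i, 1 ≤ d i) :
    ((#{i | d i = 1} : K) + 2 * #{i | 2 ≤ d i}) ^ 2 - (#{i | d i = 1} + 4 * #{i | 2 ≤ d i})
      ≤ ∑ p ∈ (univ : Finset V).offDiag, R p.1 p.2 * (d p.1 : K) * (d p.2 : K) := by
  have hsum : ∑ i, ((min (d i) 2 : ℕ) : K) = #{i | d i = 1} + 2 * #{i | 2 ≤ d i} := by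
    rw [sum_min_two hd fun n => (n : K)]
    simp [mul_comm]
  have hsum_sq : ∑ i, ((min (d i) 2 : ℕ) : K) ^ 2 = #{i | d i = 1} + 4 * #{i | 2 ≤ d i} := by
    rw [sum_min_two hd fun n => (n : K) ^ 2]
    norm_num [mul_comm]
  rw [← hsum, ← hsum_sq, ← sum_offDiag_mul]
  exact sum_offDiag_mul_le_of_one_le univ hR (fun _ => Nat.cast_nonneg _)
    fun _ => Nat.cast_le.mpr (min_le_left _ _)

end Pairs

theorem sub_three_le_vertex_contribution {K : Type*} [CommRing K] [LinearOrder K]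
    [IsStrictOrderedRing K] {g : K} (hg : 2 ≤ g) {d h : ℕ} (hd : 1 ≤ d) {m : ℕ → ℤ}
    (hsum : ∑ s ∈ Icc 1 h, m s = d) :
    (d : K) - 3 ≤ (g - 2) * (d : K) ^ 2 - 2 * g - ∑ s ∈ Icc 2 h, (m s : K) * (m (s - 1) : K)
      + g * ∑ s ∈ Icc 1 h, (m s : K) ^ 2 := by
  have hne : ∃ s ∈ Icc 1 h, m s ≠ 0 := exists_ne_zero_of_sum_ne_zero (by rw [hsum]; lia)
  have hchain : ∑ s ∈ Icc 2 h, (m s : K) * (m (s - 1) : K) + 1 ≤ ∑ s ∈ Icc 1 h, (m s : K) ^ 2 :=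
    mod_cast Int.add_one_le_of_lt (sum_mul_pred_lt_sum_sq hne)
  have hsq : (d : K) ≤ ∑ s ∈ Icc 1 h, (m s : K) ^ 2 := by
    have : (d : ℤ) ≤ ∑ s ∈ Icc 1 h, m s ^ 2 :=
      hsum ▸ sum_le_sum fun s _ => Int.le_self_sq (m s)
    exact_mod_cast this
  have hd' : (1 : K) ≤ d := mod_cast hd
  have hgap : 0 ≤ (g - 2) * ((d : K) ^ 2 - 2 + ∑ s ∈ Icc 1 h, (m s : K) ^ 2) :=
    mul_nonneg (by linarith) (by linarith [one_le_pow₀ (n := 2) hd'])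
  linarith

/-- The Euler form `⟨d,d⟩` of a quiver with `g i` loops at the vertex `i` and `R i j` arrows
joining distinct vertices `i` and `j`, as it enters the dimension bound. The sum over unordered
pairs is encoded as half the sum over ordered pairs, so that a matrix `R` that is not symmetric
stands for its symmetrization `(R i j + R j i) / 2`. -/
def eulerForm {V K : Type*} [Fintype V] [Field K] (g : V → K) (R : V → V → K) (d : V → K) :
    K :=
  (∑ i, (1 - g i) * d i ^ 2) - (∑ p ∈ (univ : Finset V).offDiag, R p.1 p.2 * d p.1 * d p.2) / 2

theorem totally_negative_dimension_inequality_general {V K : Type*} [Fintype V] [Field K]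
    [LinearOrder K] [IsStrictOrderedRing K] (g : V → K) (hg : ∀ i, 2 ≤ g i) (R : V → V → K)
    (hR : ∀ i j, i ≠ j → 1 ≤ R i j) (d : V → ℕ) (hd : ∀ i, 1 ≤ d i) (h : V → ℕ)
    (m : V → ℕ → ℤ) (hsum : ∀ i, ∑ s ∈ Icc 1 (h i), m i s = d i) :
    (∑ i, ((d i : K) - 1)) + 2 * ((#{i | 2 ≤ d i} : K) - 1) * ((Fintype.card V : K) - 1)
      + (#{i | d i = 1} : K) * ((#{i | d i = 1} : K) - 1) / 2
    ≤ 2 * (1 - eulerForm g R (fun i => (d i : K)) - ∑ i, g i)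
      - ((∑ i, (d i : K) ^ 2) - 1 + 1 - eulerForm g R (fun i => (d i : K))
        + (∑ i, ∑ s ∈ Icc 2 (h i), (m i s : K) * (m i (s - 1) : K))
        - ∑ i, g i * ∑ s ∈ Icc 1 (h i), (m i s : K) ^ 2) := by
  have hcard : (Fintype.card V : K) = #{i | d i = 1} + #{i | 2 ≤ d i} :=
    mod_cast card_eq_card_eq_one_add_card_two_le hd
  calc
    _ = 2 + ∑ i, ((d i : K) - 3) + (((#{i | d i = 1} : K) + 2 * #{i | 2 ≤ d i}) ^ 2
          - (#{i | d i = 1} + 4 * #{i | 2 ≤ d i})) / 2 := by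
      simp only [sum_sub_distrib, sum_const, card_univ, nsmul_eq_mul, hcard]
      ring
    _ ≤ 2 + ∑ i, ((g i - 2) * (d i : K) ^ 2 - 2 * g i
          - ∑ s ∈ Icc 2 (h i), (m i s : K) * (m i (s - 1) : K)
          + g i * ∑ s ∈ Icc 1 (h i), (m i s : K) ^ 2)
        + (∑ p ∈ (univ : Finset V).offDiag, R p.1 p.2 * (d p.1 : K) * (d p.2 : K)) / 2 := by
      gcongr with i
      · exact sub_three_le_vertex_contribution (hg i) (hd i) (hsum i)
      · exact le_sum_offDiag_mul_natCast hR hd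
    _ = _ := by
      simp only [eulerForm, sub_mul, one_mul, sum_sub_distrib, sum_add_distrib, ← mul_sum]
      ring

end

/-- the arithmetic core of the dimension bound for totally negative
quivers.  Let `V` be a finite set of `r ≥ 1` vertices, `g_i ≥ 2` the number of loops at
`i`, `R_{ij} = R_{ji} ≥ 1` the number of arrows joining distinct `i, j`, and for each
`i` let `d_i ≥ 1` be written as `d_i = m_{i,1} + ⋯ + m_{i,h_i}` with `h_i ≥ 1` and all
`m_{i,s} ≥ 1`.  With `⟨d,d⟩ := Σ_i (1 − g_i) d_i² − Σ_{{i,j}, i≠j} R_{ij} d_i d_j`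
(the sum over unordered pairs being half the sum over ordered pairs),
`r₁ := #{i : d_i = 1}` and `r₂ := #{i : d_i ≥ 2}`, one has
`2·(1 − ⟨d,d⟩ − Σ_i g_i) − (Σ_i d_i² − 1 + 1 − ⟨d,d⟩ + Σ_i Σ_{s=2}^{h_i} m_{i,s} m_{i,s−1}`
`− Σ_i g_i·Σ_s m_{i,s}²) ≥ Σ_i (d_i − 1) + 2(r₂ − 1)(r − 1) + r₁(r₁ − 1)/2`. -/
theorem totally_negative_dimension_inequality (V : Type) [Fintype V] [DecidableEq V]
    (hV : 1 ≤ Fintype.card V)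
    (g : V → ℕ) (hg : ∀ i, 2 ≤ g i)
    (R : V → V → ℕ) (hRsymm : ∀ i j, R i j = R j i) (hR : ∀ i j, i ≠ j → 1 ≤ R i j)
    (d : V → ℕ) (hd : ∀ i, 1 ≤ d i)
    (h : V → ℕ) (hh : ∀ i, 1 ≤ h i)
    (m : V → ℕ → ℕ) (hm : ∀ i, ∀ s ∈ Finset.Icc 1 (h i), 1 ≤ m i s)
    (hsum : ∀ i, ∑ s ∈ Finset.Icc 1 (h i), m i s = d i)
    (euler : ℚ)
    (heuler : euler = (∑ i : V, (1 - (g i : ℚ)) * (d i : ℚ) ^ 2)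
      - (∑ p ∈ (Finset.univ : Finset V).offDiag,
          (R p.1 p.2 : ℚ) * (d p.1 : ℚ) * (d p.2 : ℚ)) / 2) :
    (∑ i : V, ((d i : ℚ) - 1))
      + 2 * (((Finset.univ.filter fun i : V => 2 ≤ d i).card : ℚ) - 1)
          * ((Fintype.card V : ℚ) - 1)
      + ((Finset.univ.filter fun i : V => d i = 1).card : ℚ)
          * (((Finset.univ.filter fun i : V => d i = 1).card : ℚ) - 1) / 2
    ≤ 2 * (1 - euler - ∑ i : V, (g i : ℚ))
      - ((∑ i : V, (d i : ℚ) ^ 2) - 1 + 1 - euler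
        + (∑ i : V, ∑ s ∈ Finset.Icc 2 (h i), (m i s : ℚ) * (m i (s - 1) : ℚ))
        - ∑ i : V, (g i : ℚ) * ∑ s ∈ Finset.Icc 1 (h i), (m i s : ℚ) ^ 2) := by
  simpa only [eulerForm, ← heuler, Int.cast_natCast] using
    totally_negative_dimension_inequality_general (fun i => (g i : ℚ)) (fun i => mod_cast hg i)
      (fun i j => (R i j : ℚ)) (fun i j hij => mod_cast hR i j hij) d hd h
      (fun i s => (m i s : ℤ)) (fun i => mod_cast hsum i)
end
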